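/- arXiv:2202.01278 — 2 statements merged into one kernel-verified Lean document; each statement's English description precedes it below -/
import Mathlib

section
/- Let m ∈ ℕ, let α ∈ ℝ, and let n ≥ m. Then the polynomial identity x · (d/dx)L^{I,(α)}_{m,n}(x) + α · L^{I,(α)}_{m,n}(x) = (α+n) · L_{n−m}^{(α−1)}(x) · L_m^{(α−1)}(−x) holds for all x. -/
open Finset

/-- Generalized binomial coefficient `C(t, j) = t(t-1)⋯(t-j+1)/j!`. -/
noncomputable def genBinom (t : ℝ) (j : ℕ) : ℝ :=
  (∏ i ∈ Finset.range j, (t - i)) / (Nat.factorial j)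

/-- Generalized Laguerre polynomial `L_n^{(α)}(x)`, with the convention
`L_n^{(α)} = 0` for negative integer index `n`. -/
noncomputable def laguerre (α : ℝ) (n : ℤ) (x : ℝ) : ℝ :=
  if 0 ≤ n then
    ∑ k ∈ Finset.range (n.toNat + 1),
      ((-1 : ℝ) ^ k / (Nat.factorial k)) * genBinom ((n : ℝ) + α) (n.toNat - k) * x ^ k
  else 0

/-- Type-I exceptional `X_m`-Laguerre polynomial. -/
noncomputable def XLagI (m : ℕ) (α : ℝ) (n : ℕ) (x : ℝ) : ℝ :=
  laguerre α (m : ℤ) (-x) * laguerre (α - 1) ((n : ℤ) - m) x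
    + laguerre (α - 1) (m : ℤ) (-x) * laguerre α ((n : ℤ) - m - 1) x

/-!
With the convention that `L_n^{(α)} = 0` for `n < 0`, the three classical relations
`(L_n^{(α)})' = -L_{n-1}^{(α+1)}`, `L_n^{(α)} = L_{n-1}^{(α)} + L_n^{(α-1)}` and
`n L_n^{(α)} = (n + α) L_{n-1}^{(α)} - x L_{n-1}^{(α+1)}` hold for every integer `n`. The last two
combine to `α L_n^{(α)} - x L_{n-1}^{(α+1)} = (n + α) L_n^{(α-1)}`, that is, `x d/dx + α` lowers the
parameter of `L_n^{(α)}`. Applying `x d/dx + α` to `L_m^{(α)}(-x) L_k^{(α-1)}(x)` and to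
`L_m^{(α-1)}(-x) L_{k-1}^{(α)}(x)`, where `k = n - m`, the cross terms
`x L_m^{(α)}(-x) L_{k-1}^{(α)}(x)` cancel. What remains is a multiple of `L_m^{(α-1)}(-x)`,
whose cofactor is `(α + n) L_k^{(α-1)}(x)` by the third relation with parameter `α - 1`.
-/

theorem succ_mul_choose_succ {R : Type*} [Ring R] [BinomialRing R] (r : R) (k : ℕ) :
    (k + 1) * Ring.choose (r + 1) (k + 1) = (r + 1) * Ring.choose r k := by
  simpa using Ring.choose_add_smul_choose r k 1

theorem genBinom_eq_choose (t : ℝ) (j : ℕ) : genBinom t j = Ring.choose t j := by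
  rw [genBinom, Ring.choose_eq_smul, ← Polynomial.aeval_eq_smeval, Polynomial.aeval_def,
    ← Polynomial.eval_map, descPochhammer_map, descPochhammer_eval_eq_prod_range, smul_eq_mul,
    div_eq_inv_mul]

theorem laguerre_of_neg (α : ℝ) {n : ℤ} (hn : n < 0) (x : ℝ) : laguerre α n x = 0 :=
  if_neg hn.not_ge

theorem laguerre_natCast (α : ℝ) (n : ℕ) (x : ℝ) :
    laguerre α n x =
      ∑ p ∈ antidiagonal n,
        (-1) ^ p.1 / (p.1.factorial : ℝ) * Ring.choose (n + α) p.2 * x ^ p.1 := by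
  simp only [laguerre, genBinom_eq_choose, Nat.cast_nonneg, if_true, Int.toNat_natCast,
    Int.cast_natCast]
  exact (Nat.sum_antidiagonal_eq_sum_range_succ
    (fun k r ↦ (-1) ^ k / (k.factorial : ℝ) * Ring.choose (n + α) r * x ^ k) n).symm

theorem laguerre_zero (α x : ℝ) : laguerre α 0 x = 1 := by
  simpa using laguerre_natCast α 0 x

theorem hasDerivAt_laguerre_natCast_succ (α : ℝ) (n : ℕ) (x : ℝ) :
    HasDerivAt (laguerre α (n + 1 : ℕ)) (-laguerre (α + 1) n x) x := by
  have hα : ((n + 1 : ℕ) : ℝ) + α = n + (α + 1) := by push_cast; ring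
  rw [funext (laguerre_natCast α (n + 1)), laguerre_natCast, ← sum_neg_distrib]
  simp only [Nat.sum_antidiagonal_succ, pow_zero, hα]
  refine (HasDerivAt.fun_sum fun p _ ↦ ?_).const_add _
  refine ((hasDerivAt_pow (p.1 + 1) x).const_mul _).congr_deriv ?_
  rw [Nat.factorial_succ, Nat.add_sub_cancel]
  push_cast
  field_simp
  ring

theorem laguerre_natCast_succ_eq_add (α : ℝ) (n : ℕ) (x : ℝ) :
    laguerre α (n + 1 : ℕ) x = laguerre α n x + laguerre (α - 1) (n + 1 : ℕ) x := by
  have hα : ((n + 1 : ℕ) : ℝ) + α = n + α + 1 := by push_cast; ring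
  have hα' : ((n + 1 : ℕ) : ℝ) + (α - 1) = n + α := by push_cast; ring
  simp only [laguerre_natCast, Nat.sum_antidiagonal_succ', hα, hα', Ring.choose_succ_succ,
    Ring.choose_zero_right, mul_add, add_mul, sum_add_distrib]
  ring

theorem succ_mul_laguerre_natCast_succ (α : ℝ) (n : ℕ) (x : ℝ) :
    (n + 1) * laguerre α (n + 1 : ℕ) x =
      (n + 1 + α) * laguerre α n x - x * laguerre (α + 1) n x := by
  have hα : ((n + 1 : ℕ) : ℝ) + α = n + α + 1 := by push_cast; ring
  set c : ℕ × ℕ → ℝ := fun p ↦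
    (-1) ^ p.1 / (p.1.factorial : ℝ) * Ring.choose (n + α + 1) p.2 * x ^ p.1 with hc
  have sum_fst : ∑ p ∈ antidiagonal (n + 1), p.1 * c p = -(x * laguerre (α + 1) n x) := by
    rw [Nat.sum_antidiagonal_succ, laguerre_natCast, mul_sum, ← sum_neg_distrib]
    simp only [Nat.cast_zero, zero_mul, zero_add, hc, Nat.factorial_succ, ← add_assoc]
    refine sum_congr rfl fun p _ ↦ ?_
    push_cast
    field_simp
    ring
  have sum_snd : ∑ p ∈ antidiagonal (n + 1), p.2 * c p = (n + 1 + α) * laguerre α n x := by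
    rw [Nat.sum_antidiagonal_succ', laguerre_natCast, mul_sum]
    simp only [Nat.cast_zero, zero_mul, zero_add, hc]
    refine sum_congr rfl fun p _ ↦ ?_
    push_cast
    linear_combination (-1) ^ p.1 / (p.1.factorial : ℝ) * x ^ p.1 *
      succ_mul_choose_succ (n + α) p.2
  calc (n + 1) * laguerre α (n + 1 : ℕ) x
      = ∑ p ∈ antidiagonal (n + 1), (p.1 * c p + p.2 * c p) := by
        rw [laguerre_natCast, mul_sum, hα]
        refine sum_congr rfl fun p hp ↦ ?_
        have hp' : (p.1 : ℝ) + p.2 = n + 1 := by exact_mod_cast mem_antidiagonal.mp hp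
        rw [← add_mul, hp']
    _ = (n + 1 + α) * laguerre α n x - x * laguerre (α + 1) n x := by
        rw [sum_add_distrib, sum_fst, sum_snd]
        ring

theorem hasDerivAt_laguerre (α : ℝ) (n : ℤ) (x : ℝ) :
    HasDerivAt (laguerre α n) (-laguerre (α + 1) (n - 1) x) x := by
  rcases lt_trichotomy n 0 with hn | rfl | hn
  · rw [funext (laguerre_of_neg α hn), laguerre_of_neg _ (by lia), neg_zero]
    exact hasDerivAt_const x 0
  · rw [funext (laguerre_zero α), laguerre_of_neg _ (by lia), neg_zero]
    exact hasDerivAt_const x 1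
  · obtain ⟨k, rfl⟩ := Int.eq_succ_of_zero_lt hn
    simpa using hasDerivAt_laguerre_natCast_succ α k x

theorem laguerre_eq_laguerre_sub_one_add (α : ℝ) (n : ℤ) (x : ℝ) :
    laguerre α n x = laguerre α (n - 1) x + laguerre (α - 1) n x := by
  rcases lt_trichotomy n 0 with hn | rfl | hn
  · simp only [laguerre_of_neg _ hn, laguerre_of_neg _ (by lia : n - 1 < 0), add_zero]
  · simp only [laguerre_zero, laguerre_of_neg _ (by lia : (0 : ℤ) - 1 < 0), zero_add]
  · obtain ⟨k, rfl⟩ := Int.eq_succ_of_zero_lt hn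
    simpa using laguerre_natCast_succ_eq_add α k x

theorem intCast_mul_laguerre (α : ℝ) (n : ℤ) (x : ℝ) :
    n * laguerre α n x = (n + α) * laguerre α (n - 1) x - x * laguerre (α + 1) (n - 1) x := by
  rcases lt_trichotomy n 0 with hn | rfl | hn
  · simp only [laguerre_of_neg _ hn, laguerre_of_neg _ (by lia : n - 1 < 0), mul_zero, sub_zero]
  · simp [laguerre_of_neg]
  · obtain ⟨k, rfl⟩ := Int.eq_succ_of_zero_lt hn
    simpa using succ_mul_laguerre_natCast_succ α k x

theorem mul_laguerre_sub_mul_laguerre_add_one (α : ℝ) (n : ℤ) (x : ℝ) :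
    α * laguerre α n x - x * laguerre (α + 1) (n - 1) x = (n + α) * laguerre (α - 1) n x := by
  linear_combination
    (n + α) * laguerre_eq_laguerre_sub_one_add α n x - intCast_mul_laguerre α n x

theorem hasDerivAt_laguerre_neg (α : ℝ) (n : ℤ) (x : ℝ) :
    HasDerivAt (fun y ↦ laguerre α n (-y)) (laguerre (α + 1) (n - 1) (-x)) x :=
  ((hasDerivAt_laguerre α n (-x)).comp x (hasDerivAt_neg x)).congr_deriv (by ring)

theorem hasDerivAt_XLagI (m : ℕ) (α : ℝ) (n : ℕ) (x : ℝ) :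
    HasDerivAt (XLagI m α n)
      (laguerre (α + 1) (m - 1) (-x) * laguerre (α - 1) (n - m) x
        - laguerre α m (-x) * laguerre α (n - m - 1) x
        + laguerre α (m - 1) (-x) * laguerre α (n - m - 1) x
        - laguerre (α - 1) m (-x) * laguerre (α + 1) (n - m - 1 - 1) x) x := by
  have h₁ := (hasDerivAt_laguerre_neg α m x).fun_mul (hasDerivAt_laguerre (α - 1) (n - m) x)
  have h₂ := (hasDerivAt_laguerre_neg (α - 1) m x).fun_mul (hasDerivAt_laguerre α (n - m - 1) x)
  rw [sub_add_cancel] at h₁ h₂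
  exact (h₁.fun_add h₂).congr_deriv (by ring)

theorem stmt2 (m : ℕ) (α : ℝ) (n : ℕ) (hmn : m ≤ n) :
    ∀ x : ℝ,
      x * deriv (XLagI m α n) x + α * XLagI m α n x =
        (α + n) * laguerre (α - 1) ((n : ℤ) - m) x * laguerre (α - 1) (m : ℤ) (-x) := by
  intro x
  have lower_neg := mul_laguerre_sub_mul_laguerre_add_one α m (-x)
  have lower := mul_laguerre_sub_mul_laguerre_add_one α (n - m - 1) x
  have contiguous := laguerre_eq_laguerre_sub_one_add α m (-x)
  have recurrence := intCast_mul_laguerre (α - 1) (n - m) x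
  rw [sub_add_cancel] at recurrence
  push_cast at lower_neg lower recurrence
  rw [(hasDerivAt_XLagI m α n x).deriv, XLagI]
  linear_combination laguerre (α - 1) (n - m) x * lower_neg
    + laguerre (α - 1) m (-x) * (lower - recurrence)
    - x * laguerre α (n - m - 1) x * contiguous
end

section
/- Let m ∈ ℕ, let α ∈ (−1,0), and let n > m. Let y_1,…,y_m ∈ ℂ list the roots of L_m^{(−α−1)} with multiplicity, i.e., L_m^{(−α−1)}(X) = ((−1)^m/m!)·∏_{j=1}^m (X−y_j), and let z_1,…,z_{n−m−1} ∈ ℂ list the roots of L_{n−m−1}^{(α+1)} with multiplicity similarly. Set Z_j = −y_j for 1 ≤ j ≤ m and Z_{m+j} = z_j for 1 ≤ j ≤ n−m−1. For x ∈ ℂ let M(x) be the n×n matrix whose j-th row, for 1 ≤ j ≤ n−1, is (1, Z_j, Z_j², …, Z_j^{n−1}), and whose last row is (1, x/2, x²/3, …, x^{n−1}/n). Then for every x ∈ ℂ, m!·(n−m−1)!·(∏_{1≤i<j≤n−1}(Z_j−Z_i))·L^{III,(α)}_{m,n}(x) = (−1)^{n−m−1}·n·x·det M(x) + m!·(n−m−1)!·(∏_{1≤i<j≤n−1}(Z_j−Z_i))·(m+1)·C(n−m+α,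 n−m−1)·C(m−α−1, m+1); moreover the points Z_1,…,Z_{n−1} are pairwise distinct, so the Vandermonde factor is nonzero. -/
open Finset

/-- Generalized Laguerre polynomial `L_n^{(α)}(x)` evaluated at complex `x`,
with the convention `L_n^{(α)} = 0` for negative integer index `n`. -/
noncomputable def laguerreC (α : ℝ) (n : ℤ) (x : ℂ) : ℂ :=
  if 0 ≤ n then
    ∑ k ∈ Finset.range (n.toNat + 1),
      ((-1 : ℂ) ^ k / (Nat.factorial k)) * (genBinom ((n : ℝ) + α) (n.toNat - k) : ℂ) * x ^ k
  else 0

/-- Type-III exceptional `X_m`-Laguerre polynomial (complex variable), for `n ≥ m + 1`. -/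
noncomputable def XLagIIIC (m : ℕ) (α : ℝ) (n : ℕ) (x : ℂ) : ℂ :=
  x * laguerreC (α + 2) ((n : ℤ) - m - 2) x * laguerreC (-α - 1) (m : ℤ) (-x)
    + ((m : ℂ) + 1) * laguerreC (-α - 2) ((m : ℤ) + 1) (-x) * laguerreC (α + 1) ((n : ℤ) - m - 1) x

/-!
Write `N = n - m - 1`. Since `L_n^{(a)}` has derivative `-L_{n-1}^{(a+1)}` and satisfies a
first-order recurrence in `(a, n)`, the derivative of `L^{III,(α)}_{m,n}` collapses to
`n · L_m^{(-α-1)}(-x) · L_N^{(α+1)}(x)`, a constant times `∏ (x - Z_j)`. The determinant is linear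
in its last row and `x ^ (k + 1) / (k + 1)` is a primitive of `x ^ k`, so `x · det M(x)` has as
derivative the Vandermonde determinant of `Z_1, …, Z_{n-1}, x`, which is again a multiple of
`∏ (x - Z_j)`. Both sides of the identity thus have the same derivative, and they agree at `0`.

For `a > -1` the zeros of `L_n^{(a)}` lie in the open right half-plane: if `L_{n+1}^{(a)}` had a
zero `x` with `Re x ≤ 0`, the recurrence would give `q'(x) / q(x) = 1 - (a + 1) / x` for
`q = L_n^{(a+1)}`, with real part at least `1`, whereas by induction `q' / q = ∑ 1 / (x - z)`, over
the zeros `z` of `q`, has nonpositive real part there. The recurrence also shows that nonzero roots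
are simple. Hence the `y_j` and the `z_j` are distinct, and `-y_i ≠ z_j` by the signs of the real
parts.
-/

section Determinant

/-- The matrix with rows `(Z_j ^ k)_k` followed by `(w ^ k / (k + 1))_k`: the Vandermonde matrix of
`Z_1, …, Z_p, t`, with its last row averaged over `t` in `[0, w]`. -/
def integratedVandermonde {𝕜 : Type*} [Field 𝕜] {p : ℕ} (Z : Fin p → 𝕜) (w : 𝕜) :
    Matrix (Fin (p + 1)) (Fin (p + 1)) 𝕜 :=
  (Matrix.vandermonde (Fin.snoc Z 0)).updateRow (Fin.last p) fun k => w ^ (k : ℕ) / ((k : ℕ) + 1)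

theorem integratedVandermonde_eq_of_dite {𝕜 : Type*} [Field 𝕜] {p : ℕ} (Z : Fin p → 𝕜) (w : 𝕜) :
    integratedVandermonde Z w = Matrix.of fun (i k : Fin (p + 1)) =>
      if h : (i : ℕ) < p then Z ⟨i, h⟩ ^ (k : ℕ) else w ^ (k : ℕ) / ((k : ℕ) + 1) := by
  ext i k
  cases i using Fin.lastCases <;>
    simp [integratedVandermonde, Matrix.updateRow_ne, Fin.castSucc_ne_last,
      Matrix.vandermonde_apply]

theorem updateRow_vandermonde_snoc {R : Type*} [CommRing R] {p : ℕ} (Z : Fin p → R) (s t : R) :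
    (Matrix.vandermonde (Fin.snoc Z s)).updateRow (Fin.last p) (fun k => t ^ (k : ℕ)) =
      Matrix.vandermonde (Fin.snoc Z t : Fin (p + 1) → R) := by
  ext i k
  cases i using Fin.lastCases <;>
    simp [Matrix.updateRow_ne, Fin.castSucc_ne_last, Matrix.vandermonde_apply]

theorem prod_Ioi_castSucc {M : Type*} [CommMonoid M] {p : ℕ} (f : Fin (p + 1) → M) (i : Fin p) :
    ∏ j ∈ Ioi i.castSucc, f j = (∏ j ∈ Ioi i, f j.castSucc) * f (Fin.last p) := by
  simp [← Finset.filter_lt_eq_Ioi, Finset.prod_filter, Fin.prod_univ_castSucc, Fin.castSucc_lt_last]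

theorem det_vandermonde_snoc {R : Type*} [CommRing R] {p : ℕ} (Z : Fin p → R) (t : R) :
    (Matrix.vandermonde (Fin.snoc Z t : Fin (p + 1) → R)).det =
      (∏ i, ∏ j ∈ Ioi i, (Z j - Z i)) * ∏ j, (t - Z j) := by
  have Ioi_last : Ioi (Fin.last p) = ∅ := Finset.Ioi_eq_empty.2 isMax_top
  simp [Matrix.det_vandermonde, Fin.prod_univ_castSucc, prod_Ioi_castSucc, Ioi_last,
    Finset.prod_mul_distrib]

theorem hasDerivAt_det_updateRow {𝕜 ι : Type*} [NontriviallyNormedField 𝕜] [Fintype ι]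
    [DecidableEq ι] (A : Matrix ι ι 𝕜) (i : ι) {r : 𝕜 → ι → 𝕜} {r' : ι → 𝕜} {x : 𝕜}
    (hr : HasDerivAt r r' x) :
    HasDerivAt (fun t => (A.updateRow i (r t)).det) (A.updateRow i r').det x := by
  simp only [← Matrix.cramer_transpose_apply]
  let cramerRow : (ι → 𝕜) →L[𝕜] (ι → 𝕜) :=
    ⟨Matrix.cramer A.transpose, LinearMap.continuous_on_pi _⟩
  exact hasDerivAt_pi.1 (cramerRow.hasFDerivAt.comp_hasDerivAt x hr) i

theorem hasDerivAt_mul_det_integratedVandermonde {𝕜 : Type*} [NontriviallyNormedField 𝕜]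
    [CharZero 𝕜] {p : ℕ} (Z : Fin p → 𝕜) (x : 𝕜) :
    HasDerivAt (fun w => w * (integratedVandermonde Z w).det)
      ((∏ i, ∏ j ∈ Ioi i, (Z j - Z i)) * ∏ j, (x - Z j)) x := by
  have hrow : HasDerivAt (fun (w : 𝕜) (k : Fin (p + 1)) => w ^ ((k : ℕ) + 1) / ((k : ℕ) + 1))
      (fun k => x ^ (k : ℕ)) x := by
    refine hasDerivAt_pi.2 fun k => ?_
    have hk : ((k : ℕ) : 𝕜) + 1 ≠ 0 := Nat.cast_add_one_ne_zero _
    exact ((hasDerivAt_pow ((k : ℕ) + 1) x).div_const (((k : ℕ) : 𝕜) + 1)).congr_deriv (by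
      simp [mul_div_cancel_left₀ _ hk])
  convert hasDerivAt_det_updateRow (Matrix.vandermonde (Fin.snoc Z 0)) (Fin.last p) hrow using 1
  · funext w
    rw [integratedVandermonde, ← Matrix.det_updateRow_smul]
    congr 2
    funext k
    rw [Pi.smul_apply, smul_eq_mul, pow_succ', mul_div_assoc]
  · rw [updateRow_vandermonde_snoc, det_vandermonde_snoc]

end Determinant

section Polynomial

open Polynomial

theorem roots_eq_map_of_eval_eq_prod {R ι : Type*} [CommRing R] [IsDomain R] [Infinite R]
    [Fintype ι] {p : R[X]} {c : R} (hc : c ≠ 0) {y : ι → R}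
    (h : ∀ x, p.eval x = c * ∏ j, (x - y j)) : p.roots = univ.val.map y := by
  have hp : p = C c * (Multiset.map (fun r => X - C r) (univ.val.map y)).prod := by
    refine Polynomial.funext fun x => ?_
    simp [h, eval_prod]
  rw [hp, roots_C_mul _ hc, roots_multiset_prod_X_sub_C]

theorem re_eval_derivative_div_eval_nonpos {p : ℂ[X]} {x : ℂ} (hx : p.eval x ≠ 0)
    (hroots : ∀ z ∈ p.roots, x.re ≤ z.re) :
    ((derivative p).eval x / p.eval x).re ≤ 0 := by
  rw [(IsAlgClosed.splits p).eval_derivative_div_eval_of_ne_zero hx,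
    ← Complex.coe_reAddGroupHom, map_multiset_sum, Multiset.map_map]
  refine (Multiset.sum_le_card_nsmul _ 0 ?_).trans_eq (smul_zero _)
  simp only [Multiset.mem_map]
  rintro _ ⟨z, hz, rfl⟩
  have hre : (x - z).re ≤ 0 := by simpa using hroots z hz
  simpa [Complex.inv_re] using div_nonpos_of_nonpos_of_nonneg hre (Complex.normSq_nonneg (x - z))

theorem genBinom_zero_right (t : ℝ) : genBinom t 0 = 1 := by
  simp [genBinom]

theorem genBinom_succ_right (t : ℝ) (j : ℕ) :
    ((j : ℝ) + 1) * genBinom t (j + 1) = (t - j) * genBinom t j := by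
  have hj : (Nat.factorial j : ℝ) ≠ 0 := Nat.cast_ne_zero.2 j.factorial_ne_zero
  rw [genBinom, genBinom, Finset.prod_range_succ, Nat.factorial_succ]
  push_cast
  field_simp

/-- The Laguerre polynomial `L_n^{(a)}` as a formal polynomial, for the arguments about its
coefficients and roots; unlike in `laguerreC`, the index is a natural number. -/
noncomputable def laguerrePoly (a : ℝ) (n : ℕ) : ℂ[X] :=
  ∑ k ∈ Finset.range (n + 1),
    C ((-1 : ℂ) ^ k / (Nat.factorial k) * (genBinom ((n : ℝ) + a) (n - k) : ℂ)) * X ^ k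

theorem eval_laguerrePoly (a : ℝ) (n : ℕ) (x : ℂ) :
    (laguerrePoly a n).eval x = laguerreC a n x := by
  simp [laguerrePoly, laguerreC, eval_finsetSum]

theorem coeff_laguerrePoly (a : ℝ) (n k : ℕ) : (laguerrePoly a n).coeff k =
    if k ≤ n then (-1 : ℂ) ^ k / (Nat.factorial k) * (genBinom ((n : ℝ) + a) (n - k) : ℂ)
    else 0 := by
  simp only [laguerrePoly, finsetSum_coeff, coeff_C_mul_X_pow, Finset.sum_ite_eq, Finset.mem_range,
    Nat.lt_succ_iff]

theorem laguerrePoly_zero_right (a : ℝ) : laguerrePoly a 0 = 1 := by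
  simp [laguerrePoly, genBinom_zero_right]

theorem laguerrePoly_ne_zero (a : ℝ) (n : ℕ) : laguerrePoly a n ≠ 0 := by
  intro h
  have hfact : (Nat.factorial n : ℂ) ≠ 0 := Nat.cast_ne_zero.2 n.factorial_ne_zero
  have hlead : (laguerrePoly a n).coeff n ≠ 0 := by
    simp [coeff_laguerrePoly, genBinom_zero_right, hfact]
  simp [h] at hlead

theorem derivative_laguerrePoly_succ (a : ℝ) (n : ℕ) :
    derivative (laguerrePoly a (n + 1)) = -laguerrePoly (a + 1) n := by
  ext k
  have hk : (k : ℂ) + 1 ≠ 0 := Nat.cast_add_one_ne_zero k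
  have hparam : ((n + 1 : ℕ) : ℝ) + a = n + (a + 1) := by push_cast; ring
  simp only [coeff_derivative, coeff_neg, coeff_laguerrePoly, Nat.add_le_add_iff_right,
    Nat.add_sub_add_right, hparam, Nat.factorial_succ, pow_succ]
  split_ifs
  · push_cast
    field_simp
  · simp

theorem coeff_laguerrePoly_add_one (a : ℝ) (n k : ℕ) :
    ((k : ℂ) + a + 1) * (laguerrePoly (a + 1) n).coeff k =
      ((n : ℂ) + 1 - k) * (laguerrePoly a (n + 1)).coeff k := by
  have hparam : ((n + 1 : ℕ) : ℝ) + a = n + (a + 1) := by push_cast; ring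
  rcases lt_trichotomy k (n + 1) with hk | rfl | hk
  · obtain ⟨d, rfl⟩ := Nat.exists_eq_add_of_le (Nat.lt_succ_iff.1 hk)
    have hbinom : ((d : ℂ) + 1) * (genBinom (((k + d : ℕ) : ℝ) + (a + 1)) (d + 1) : ℂ) =
        ((k : ℂ) + a + 1) * (genBinom (((k + d : ℕ) : ℝ) + (a + 1)) d : ℂ) := by
      have := congrArg Complex.ofReal (genBinom_succ_right (((k + d : ℕ) : ℝ) + (a + 1)) d)
      push_cast at this ⊢
      rw [this]
      ring
    rw [coeff_laguerrePoly, coeff_laguerrePoly, if_pos (by lia), if_pos (by lia), hparam,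
      Nat.add_sub_cancel_left, show k + d + 1 - k = d + 1 by lia]
    push_cast at hbinom ⊢
    linear_combination -((-1 : ℂ) ^ k / (Nat.factorial k : ℂ)) * hbinom
  · simp [coeff_laguerrePoly]
  · simp [coeff_laguerrePoly, show ¬ k ≤ n by lia, show ¬ k ≤ n + 1 by lia]

theorem laguerrePoly_succ (a : ℝ) (n : ℕ) :
    C ((n : ℂ) + 1) * laguerrePoly a (n + 1) =
      X * derivative (laguerrePoly (a + 1) n) + (C ((a : ℂ) + 1) - X) * laguerrePoly (a + 1) n := by
  have hEuler :
      X * derivative (laguerrePoly (a + 1) n) + C ((a : ℂ) + 1) * laguerrePoly (a + 1) n =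
        C ((n : ℂ) + 1) * laguerrePoly a (n + 1) - X * derivative (laguerrePoly a (n + 1)) := by
    have coeff_X_mul_derivative (p : ℂ[X]) (k : ℕ) :
        (X * derivative p).coeff k = k * p.coeff k := by
      cases k <;> simp [coeff_X_mul, coeff_derivative, mul_comm]
    ext k
    rw [coeff_add, coeff_sub, coeff_C_mul, coeff_C_mul, coeff_X_mul_derivative,
      coeff_X_mul_derivative]
    linear_combination coeff_laguerrePoly_add_one a n k
  rw [derivative_laguerrePoly_succ] at hEuler
  linear_combination -hEuler

theorem re_pos_of_eval_laguerrePoly_eq_zero {a : ℝ} (ha : -1 < a) {n : ℕ} {x : ℂ}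
    (hx : (laguerrePoly a n).eval x = 0) : 0 < x.re := by
  induction n generalizing a x with
  | zero => simp [laguerrePoly_zero_right] at hx
  | succ n ih =>
    by_contra! hre
    set q := laguerrePoly (a + 1) n
    have hq_roots (z : ℂ) (hz : q.eval z = 0) : 0 < z.re := ih (by linarith) hz
    have hqx : q.eval x ≠ 0 := fun h => (hq_roots x h).not_ge hre
    have hrec : x * (derivative q).eval x + ((a : ℂ) + 1 - x) * q.eval x = 0 := by
      simpa [hx] using (congrArg (eval x) (laguerrePoly_succ a n)).symm
    have hx0 : x ≠ 0 := by
      rintro rfl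
      have ha0 : a + 1 = 0 := by simpa [hqx, ← Complex.ofReal_one, ← Complex.ofReal_add] using hrec
      linarith
    have hlog : (derivative q).eval x / q.eval x = 1 - ((a + 1 : ℝ) : ℂ) * x⁻¹ := by
      push_cast
      field_simp
      linear_combination hrec
    have hlog_le := re_eval_derivative_div_eval_nonpos hqx fun z hz =>
      hre.trans (hq_roots z (isRoot_of_mem_roots hz)).le
    have hinv : x⁻¹.re ≤ 0 := by
      simpa [Complex.inv_re] using div_nonpos_of_nonpos_of_nonneg hre (Complex.normSq_nonneg x)
    rw [hlog, Complex.sub_re, Complex.re_ofReal_mul, Complex.one_re] at hlog_le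
    nlinarith

theorem eval_derivative_laguerrePoly_ne_zero {a : ℝ} {n : ℕ} {x : ℂ} (hx0 : x ≠ 0)
    (hx : (laguerrePoly a n).eval x = 0) : (derivative (laguerrePoly a n)).eval x ≠ 0 := by
  induction n generalizing a with
  | zero => simp [laguerrePoly_zero_right] at hx
  | succ n ih =>
    intro hx'
    have hq : (laguerrePoly (a + 1) n).eval x = 0 := by
      simpa [derivative_laguerrePoly_succ] using hx'
    have hrec := congrArg (eval x) (laguerrePoly_succ a n)
    exact ih hq (by simpa [hx, hq, hx0] using hrec)

theorem nodup_roots_laguerrePoly {a : ℝ} (ha : -1 < a) (n : ℕ) :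
    (laguerrePoly a n).roots.Nodup := by
  refine Multiset.nodup_iff_count_le_one.2 fun x => ?_
  rw [count_roots]
  by_contra! hmult
  obtain ⟨hx, hx'⟩ := (one_lt_rootMultiplicity_iff_isRoot (laguerrePoly_ne_zero a n)).1 hmult
  have hx0 : x ≠ 0 := by
    rintro rfl
    simpa using re_pos_of_eval_laguerrePoly_eq_zero ha hx
  exact eval_derivative_laguerrePoly_ne_zero hx0 hx hx'

theorem laguerreC_of_neg (a : ℝ) {n : ℤ} (hn : n < 0) : laguerreC a n = 0 := by
  funext x
  simp [laguerreC, hn.not_ge]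

theorem laguerreC_natCast (a : ℝ) (n : ℕ) : laguerreC a n = fun x => (laguerrePoly a n).eval x :=
  funext fun x => (eval_laguerrePoly a n x).symm

theorem hasDerivAt_laguerreC (a : ℝ) (n : ℤ) (x : ℂ) :
    HasDerivAt (laguerreC a n) (-laguerreC (a + 1) (n - 1) x) x := by
  rcases lt_or_ge n 0 with hn | hn
  · simp [laguerreC_of_neg, hn, show n - 1 < 0 by lia]
  lift n to ℕ using hn
  have hderiv := (laguerrePoly a n).hasDerivAt x
  rw [← laguerreC_natCast] at hderiv
  cases n with
  | zero => simpa [laguerrePoly_zero_right, laguerreC_of_neg] using hderiv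
  | succ n =>
    rwa [derivative_laguerrePoly_succ, eval_neg, eval_laguerrePoly,
      ← add_sub_cancel_right (n : ℤ) 1] at hderiv

theorem laguerreC_add_one (a : ℝ) (n : ℤ) (x : ℂ) :
    ((n : ℂ) + 1) * laguerreC a (n + 1) x =
      ((a : ℂ) + 1 - x) * laguerreC (a + 1) n x - x * laguerreC (a + 2) (n - 1) x := by
  rcases lt_trichotomy n (-1) with hn | rfl | hn
  · simp [laguerreC_of_neg, show n < 0 by lia, show n - 1 < 0 by lia, show n + 1 < 0 by lia]
  · simp [laguerreC_of_neg]
  lift n to ℕ using by lia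
  have hderiv : (derivative (laguerrePoly (a + 1) n)).eval x = -laguerreC (a + 2) (n - 1) x := by
    have hpoly := (laguerrePoly (a + 1) n).hasDerivAt x
    rw [← laguerreC_natCast] at hpoly
    rw [hpoly.unique (hasDerivAt_laguerreC (a + 1) n x), add_assoc, one_add_one_eq_two]
  have hrec := congrArg (eval x) (laguerrePoly_succ a n)
  simp only [eval_mul, eval_add, eval_sub, eval_C, eval_X, hderiv, eval_laguerrePoly] at hrec
  push_cast at hrec ⊢
  linear_combination hrec

end Polynomial

section ExceptionalLaguerre

theorem injective_of_laguerreC_eq_prod {a : ℝ} (ha : -1 < a) {n : ℕ} {ι : Type*} [Fintype ι]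
    {c : ℂ} (hc : c ≠ 0) {y : ι → ℂ} (h : ∀ x, laguerreC a n x = c * ∏ j, (x - y j)) :
    Function.Injective y := by
  have hroots := roots_eq_map_of_eval_eq_prod hc fun x => (eval_laguerrePoly a n x).trans (h x)
  have hnodup := nodup_roots_laguerrePoly ha n
  rw [hroots] at hnodup
  exact fun i j hij => Multiset.inj_on_of_nodup_map hnodup i (mem_univ i) j (mem_univ j) hij

theorem re_pos_of_laguerreC_eq_prod {a : ℝ} (ha : -1 < a) {n : ℕ} {ι : Type*} [Fintype ι]
    {c : ℂ} {y : ι → ℂ} (h : ∀ x, laguerreC a n x = c * ∏ j, (x - y j)) (i : ι) :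
    0 < (y i).re := by
  refine re_pos_of_eval_laguerrePoly_eq_zero ha (n := n) ?_
  rw [eval_laguerrePoly, h, Finset.prod_eq_zero (mem_univ i) (sub_self _), mul_zero]

theorem neg_one_pow_mul_prod_neg_sub {R ι : Type*} [CommRing R] [Fintype ι] (y : ι → R) (x : R) :
    (-1) ^ Fintype.card ι * ∏ j, (-x - y j) = ∏ j, (x - -y j) := by
  rw [← Finset.card_univ, ← Finset.prod_const, ← Finset.prod_mul_distrib]
  exact Finset.prod_congr rfl fun j _ => by ring

theorem injective_append_neg_of_re_pos {k l : ℕ} {y : Fin k → ℂ} {z : Fin l → ℂ}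
    (hy : Function.Injective y) (hz : Function.Injective z) (hy_re : ∀ i, 0 < (y i).re)
    (hz_re : ∀ i, 0 < (z i).re) : Function.Injective (Fin.append (fun i => -y i) z) := by
  refine Fin.append_injective_iff.2 ⟨neg_injective.comp hy, hz, fun i j hij => ?_⟩
  have hre : -(y i).re = (z j).re := congrArg Complex.re hij
  linarith [hy_re i, hz_re j]

theorem laguerreC_apply_zero (a : ℝ) (n : ℕ) : laguerreC a n 0 = genBinom (n + a) n := by
  rw [← eval_laguerrePoly, ← Polynomial.coeff_zero_eq_eval_zero, coeff_laguerrePoly]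
  simp

theorem hasDerivAt_XLagIIIC (m : ℕ) (α : ℝ) (n : ℕ) (x : ℂ) :
    HasDerivAt (XLagIIIC m α n)
      (n * (laguerreC (-α - 1) m (-x) * laguerreC (α + 1) ((n : ℤ) - m - 1) x)) x := by
  have hreflect (a : ℝ) (k : ℤ) :
      HasDerivAt (fun w => laguerreC a k (-w)) (laguerreC (a + 1) (k - 1) (-x)) x :=
    ((hasDerivAt_laguerreC a k (-x)).comp x (hasDerivAt_neg x)).congr_deriv (by ring)
  have hL : HasDerivAt (laguerreC (α + 2) (n - m - 2)) (-laguerreC (α + 3) (n - m - 3) x) x :=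
    (hasDerivAt_laguerreC _ _ x).congr_deriv (by ring_nf)
  have hA : HasDerivAt (fun w => laguerreC (-α - 1) m (-w)) (laguerreC (-α) (m - 1) (-x)) x :=
    (hreflect _ _).congr_deriv (by ring_nf)
  have hK : HasDerivAt (fun w => laguerreC (-α - 2) (m + 1) (-w)) (laguerreC (-α - 1) m (-x)) x :=
    (hreflect _ _).congr_deriv (by ring_nf)
  have hB : HasDerivAt (laguerreC (α + 1) (n - m - 1)) (-laguerreC (α + 2) (n - m - 2) x) x :=
    (hasDerivAt_laguerreC _ _ x).congr_deriv (by ring_nf)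
  have hB_rec : ((n : ℂ) - m - 1) * laguerreC (α + 1) (n - m - 1) x =
      (α + 2 - x) * laguerreC (α + 2) (n - m - 2) x - x * laguerreC (α + 3) (n - m - 3) x := by
    have h := laguerreC_add_one (α + 1) (n - m - 2) x
    push_cast at h
    ring_nf at h ⊢
    exact h
  have hK_rec : ((m : ℂ) + 1) * laguerreC (-α - 2) (m + 1) (-x) =
      (-α - 1 + x) * laguerreC (-α - 1) m (-x) + x * laguerreC (-α) (m - 1) (-x) := by
    have h := laguerreC_add_one (-α - 2) m (-x)
    push_cast at h
    ring_nf at h ⊢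
    exact h
  refine ((((hasDerivAt_id x).mul hL).mul hA).add
    ((hK.const_mul ((m : ℂ) + 1)).mul hB)).congr_deriv ?_
  simp only [id, Pi.mul_apply]
  linear_combination -laguerreC (-α - 1) m (-x) * hB_rec -
    laguerreC (α + 2) (n - m - 2) x * hK_rec

theorem XLagIIIC_apply_zero {m n : ℕ} (hmn : m < n) (α : ℝ) :
    XLagIIIC m α n 0 = ((m : ℂ) + 1) * (genBinom ((n : ℝ) - m + α) (n - m - 1) : ℂ) *
      (genBinom ((m : ℝ) - α - 1) (m + 1) : ℂ) := by
  have hK := laguerreC_apply_zero (-α - 2) (m + 1)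
  have hB := laguerreC_apply_zero (α + 1) (n - m - 1)
  have hindex : ((n - m - 1 : ℕ) : ℤ) = n - m - 1 := by lia
  have hcast : ((n - m - 1 : ℕ) : ℝ) = n - m - 1 := by exact_mod_cast congrArg Int.cast hindex
  rw [hindex, hcast, show (n : ℝ) - m - 1 + (α + 1) = n - m + α by ring] at hB
  push_cast at hK
  rw [show (m : ℝ) + 1 + (-α - 2) = m - α - 1 by ring] at hK
  rw [XLagIIIC, neg_zero, hK, hB]
  ring

theorem det_vandermonde_mul_XLagIIIC {m p : ℕ} {α : ℝ} {b c : ℂ} (Z : Fin p → ℂ)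
    (h : ∀ w, b * (laguerreC (-α - 1) m (-w) *
      laguerreC (α + 1) (((p + 1 : ℕ) : ℤ) - m - 1) w) = c * ∏ j, (w - Z j)) (w : ℂ) :
    b * (∏ i, ∏ j ∈ Ioi i, (Z j - Z i)) * XLagIIIC m α (p + 1) w =
      c * ((p + 1 : ℕ) : ℂ) * w * (integratedVandermonde Z w).det +
        b * (∏ i, ∏ j ∈ Ioi i, (Z j - Z i)) * XLagIIIC m α (p + 1) 0 := by
  set V := ∏ i, ∏ j ∈ Ioi i, (Z j - Z i)
  let difference (w : ℂ) := b * V * XLagIIIC m α (p + 1) w -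
    c * ((p + 1 : ℕ) : ℂ) * (w * (integratedVandermonde Z w).det)
  have hderiv (x : ℂ) : HasDerivAt difference 0 x := by
    refine (((hasDerivAt_XLagIIIC m α (p + 1) x).const_mul (b * V)).sub
      ((hasDerivAt_mul_det_integratedVandermonde Z x).const_mul
        (c * ((p + 1 : ℕ) : ℂ)))).congr_deriv ?_
    linear_combination ((p + 1 : ℕ) : ℂ) * V * h x
  have hconst := is_const_of_deriv_eq_zero (fun x => (hderiv x).differentiableAt)
    (fun x => (hderiv x).deriv) w 0
  simp only [difference] at hconst
  linear_combination hconst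

end ExceptionalLaguerre

theorem sub_one_eq_add_sub_sub_one {m n : ℕ} (hmn : m < n) : n - 1 = m + (n - m - 1) := by
  lia

theorem stmt7_general (m : ℕ) (α : ℝ) (n : ℕ) (hmn : m < n)
    (y : Fin m → ℂ) (z : Fin (n - m - 1) → ℂ)
    (hy : ∀ X : ℂ, laguerreC (-α - 1) (m : ℤ) X =
      ((-1 : ℂ) ^ m / (Nat.factorial m : ℂ)) * ∏ j, (X - y j))
    (hz : ∀ X : ℂ, laguerreC (α + 1) ((n : ℤ) - m - 1) X =
      ((-1 : ℂ) ^ (n - m - 1) / (Nat.factorial (n - m - 1) : ℂ)) * ∏ j, (X - z j))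
    (Z : Fin (n - 1) → ℂ)
    (hZ : Z = fun j => Fin.append (fun i => -y i) z (Fin.cast (sub_one_eq_add_sub_sub_one hmn) j))
    (M : ℂ → Matrix (Fin n) (Fin n) ℂ)
    (hM : ∀ w : ℂ, M w = Matrix.of fun (i k : Fin n) =>
      if h : (i : ℕ) < n - 1 then (Z ⟨i, h⟩) ^ (k : ℕ)
      else w ^ (k : ℕ) / (((k : ℕ) : ℂ) + 1)) :
    (∀ w : ℂ,
      (Nat.factorial m : ℂ) * (Nat.factorial (n - m - 1) : ℂ) *
          (∏ i : Fin (n - 1), ∏ j ∈ Finset.Ioi i, (Z j - Z i)) * XLagIIIC m α n w =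
        (-1 : ℂ) ^ (n - m - 1) * (n : ℂ) * w * (M w).det
          + (Nat.factorial m : ℂ) * (Nat.factorial (n - m - 1) : ℂ) *
              (∏ i : Fin (n - 1), ∏ j ∈ Finset.Ioi i, (Z j - Z i)) *
              ((m : ℂ) + 1) * (genBinom ((n : ℝ) - m + α) (n - m - 1) : ℂ) *
              (genBinom ((m : ℝ) - α - 1) (m + 1) : ℂ)) ∧
      (α ∈ Set.Ioo (-2 : ℝ) 0 → Function.Injective Z) := by
  have hN : (n : ℤ) - m - 1 = (n - m - 1 : ℕ) := by lia
  rw [hN] at hz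
  have hfact (k : ℕ) : (Nat.factorial k : ℂ) ≠ 0 := Nat.cast_ne_zero.2 k.factorial_ne_zero
  have hlead (k : ℕ) : (-1 : ℂ) ^ k / (Nat.factorial k : ℂ) ≠ 0 := by simp [hfact]
  refine ⟨fun w => ?_, fun hα => ?_⟩
  · have hprod (v : ℂ) : (Nat.factorial m : ℂ) * (Nat.factorial (n - m - 1) : ℂ) *
        (laguerreC (-α - 1) m (-v) * laguerreC (α + 1) ((n : ℤ) - m - 1) v) =
          (-1) ^ (n - m - 1) * ∏ j, (v - Z j) := by
      rw [hZ, Fin.prod_congr' (fun j => v - Fin.append (fun i => -y i) z j)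
          (sub_one_eq_add_sub_sub_one hmn),
        Fin.prod_univ_add, hN, hy, hz]
      simp only [Fin.append_left, Fin.append_right, ← neg_one_pow_mul_prod_neg_sub,
        Fintype.card_fin]
      field_simp [hfact]
    obtain ⟨p, rfl⟩ : ∃ p, n = p + 1 := ⟨n - 1, by lia⟩
    have hdet := det_vandermonde_mul_XLagIIIC (p := p) Z hprod w
    have hMw : M w = integratedVandermonde Z w :=
      (hM w).trans (integratedVandermonde_eq_of_dite (p := p) Z w).symm
    rw [XLagIIIC_apply_zero hmn] at hdet
    simp only [← mul_assoc] at hdet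
    rw [hMw]
    exact hdet
  · have hα_y : -1 < -α - 1 := by linarith [hα.2]
    have hα_z : -1 < α + 1 := by linarith [hα.1]
    rw [hZ]
    exact (injective_append_neg_of_re_pos (injective_of_laguerreC_eq_prod hα_y (hlead m) hy)
      (injective_of_laguerreC_eq_prod hα_z (hlead (n - m - 1)) hz)
      (re_pos_of_laguerreC_eq_prod hα_y hy) (re_pos_of_laguerreC_eq_prod hα_z hz)).comp
        (Fin.cast_injective (sub_one_eq_add_sub_sub_one hmn))

theorem stmt7 (m : ℕ) (α : ℝ) (hα : α ∈ Set.Ioo (-1 : ℝ) 0) (n : ℕ) (hmn : m < n)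
    (y : Fin m → ℂ) (z : Fin (n - m - 1) → ℂ)
    (hy : ∀ X : ℂ, laguerreC (-α - 1) (m : ℤ) X =
      ((-1 : ℂ) ^ m / (Nat.factorial m : ℂ)) * ∏ j, (X - y j))
    (hz : ∀ X : ℂ, laguerreC (α + 1) ((n : ℤ) - m - 1) X =
      ((-1 : ℂ) ^ (n - m - 1) / (Nat.factorial (n - m - 1) : ℂ)) * ∏ j, (X - z j))
    (Z : Fin (n - 1) → ℂ)
    (hZ : Z = fun j => Fin.append (fun i => -y i) z
      (Fin.cast (show n - 1 = m + (n - m - 1) by omega) j))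
    (M : ℂ → Matrix (Fin n) (Fin n) ℂ)
    (hM : ∀ w : ℂ, M w = Matrix.of fun (i k : Fin n) =>
      if h : (i : ℕ) < n - 1 then (Z ⟨i, h⟩) ^ (k : ℕ)
      else w ^ (k : ℕ) / (((k : ℕ) : ℂ) + 1)) :
    (∀ w : ℂ,
      (Nat.factorial m : ℂ) * (Nat.factorial (n - m - 1) : ℂ) *
          (∏ i : Fin (n - 1), ∏ j ∈ Finset.Ioi i, (Z j - Z i)) * XLagIIIC m α n w =
        (-1 : ℂ) ^ (n - m - 1) * (n : ℂ) * w * (M w).det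
          + (Nat.factorial m : ℂ) * (Nat.factorial (n - m - 1) : ℂ) *
              (∏ i : Fin (n - 1), ∏ j ∈ Finset.Ioi i, (Z j - Z i)) *
              ((m : ℂ) + 1) * (genBinom ((n : ℝ) - m + α) (n - m - 1) : ℂ) *
              (genBinom ((m : ℝ) - α - 1) (m + 1) : ℂ)) ∧
      Function.Injective Z :=
  (stmt7_general m α n hmn y z hy hz Z hZ M hM).imp_right fun h =>
    h ⟨by linarith [hα.1], hα.2⟩
end
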